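/- arXiv:1311.0131 — 6 statements merged into one kernel-verified Lean document; each statement's English description precedes it below -/
import Mathlib

section
/- Let x, y ∈ ℝ^4 be linearly independent and u, v ∈ ℝ^4 be linearly independent. Then span{x,y} = span{u,v} if and only if there exists a nonzero λ ∈ ℝ with p(u,v) = λ • p(x,y). (Hence the Klein mapping is well defined and injective on lines of P^3(ℝ).) -/
/-- The Plücker coordinate vector `(p01, p02, p03, p23, p31, p12)` of the
pair `x, y ∈ ℝ⁴`. -/
def pluck (x y : Fin 4 → ℝ) : Fin 6 → ℝ :=
  ![x 0 * y 1 - x 1 * y 0, x 0 * y 2 - x 2 * y 0, x 0 * y 3 - x 3 * y 0,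
    x 2 * y 3 - x 3 * y 2, x 3 * y 1 - x 1 * y 3, x 1 * y 2 - x 2 * y 1]

lemma exists_minor_ne_zero (u v : Fin 4 → ℝ) (h : LinearIndependent ℝ ![u, v]) :
    ∃ i j, u i * v j - u j * v i ≠ 0 := by
  rw [LinearIndependent.pair_iff] at h
  by_contra! hc
  have hu : u = 0 := by
    funext i
    have h1 := h (v i) (-(u i)) (by
      funext k
      simp only [Pi.add_apply, Pi.smul_apply, smul_eq_mul, Pi.zero_apply]
      linarith [hc k i])
    simpa using h1.2
  have h2 := h 1 0 (by simp [hu])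
  exact one_ne_zero h2.1

lemma minors_of_pluck (x y u v : Fin 4 → ℝ) (l : ℝ) (h : pluck u v = l • pluck x y) (i j : Fin 4) :
    u i * v j - u j * v i = l * (x i * y j - x j * y i) := by
  have h0 := congrFun h 0
  have h1 := congrFun h 1
  have h2 := congrFun h 2
  have h3 := congrFun h 3
  have h4 := congrFun h 4
  have h5 := congrFun h 5
  simp [pluck] at h0 h1 h2 h3 h4 h5
  fin_cases i <;> fin_cases j <;> simp <;> linarith

lemma span_le_of_minors (x y u v : Fin 4 → ℝ) (l : ℝ) (huv : LinearIndependent ℝ ![u, v])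
    (h : ∀ i j, u i * v j - u j * v i = l * (x i * y j - x j * y i)) :
    Submodule.span ℝ {x, y} ≤ Submodule.span ℝ {u, v} := by
  obtain ⟨i, j, hD⟩ := exists_minor_ne_zero u v huv
  have key : ∀ z : Fin 4 → ℝ, (∀ k, z k * (x i * y j - x j * y i) - z i * (x k * y j - x j * y k)
      + z j * (x k * y i - x i * y k) = 0) → z ∈ Submodule.span ℝ {u, v} := by
    intro z hz
    rw [Submodule.mem_span_pair]
    refine ⟨(z i * v j - z j * v i) / (u i * v j - u j * v i),
      (z j * u i - z i * u j) / (u i * v j - u j * v i), ?_⟩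
    funext k
    simp only [Pi.add_apply, Pi.smul_apply, smul_eq_mul]
    rw [div_mul_eq_mul_div, div_mul_eq_mul_div, ← add_div, div_eq_iff hD]
    linear_combination (-l) * hz k - z k * h i j + z i * h k j - z j * h k i
  rw [Submodule.span_le]
  rintro z (rfl | rfl)
  · exact key _ fun k => by ring
  · exact key _ fun k => by ring

theorem span_eq_iff_pluck_proportional (x y u v : Fin 4 → ℝ)
    (hxy : LinearIndependent ℝ ![x, y]) (huv : LinearIndependent ℝ ![u, v]) :
    Submodule.span ℝ {x, y} = Submodule.span ℝ {u, v} ↔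
      ∃ lam : ℝ, lam ≠ 0 ∧ pluck u v = lam • pluck x y := by
  constructor
  · intro h
    have hu : u ∈ Submodule.span ℝ {x, y} := h ▸ Submodule.subset_span (by simp)
    have hv : v ∈ Submodule.span ℝ {x, y} := h ▸ Submodule.subset_span (by simp)
    rw [Submodule.mem_span_pair] at hu hv
    obtain ⟨a, b, hu⟩ := hu
    obtain ⟨c, d, hv⟩ := hv
    refine ⟨a * d - b * c, ?_, ?_⟩
    · intro h0
      obtain ⟨i, j, hD⟩ := exists_minor_ne_zero u v huv
      apply hD
      simp only [← hu, ← hv, Pi.add_apply, Pi.smul_apply, smul_eq_mul]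
      linear_combination (x i * y j - x j * y i) * h0
    · funext k
      fin_cases k <;> simp [pluck, ← hu, ← hv] <;> ring
  · rintro ⟨l, hl, h⟩
    have hm := minors_of_pluck x y u v l h
    apply le_antisymm
    · exact span_le_of_minors x y u v l huv hm
    · refine span_le_of_minors u v x y l⁻¹ hxy fun i j => ?_
      rw [hm i j, inv_mul_cancel_left₀ hl]
end

section
/- Every nonzero vector p ∈ ℝ^6 satisfying the Plücker relation Ω(p) = 0 arises as the Plücker coordinate vector of a line: there exist linearly independent x, y ∈ ℝ^4 with p(x,y) = p. (Hence the Klein mapping is onto the points of the Klein quadric M_2^4.) -/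
/-- The Klein quadratic form `Ω(p) = p01*p23 + p02*p31 + p03*p12` on `ℝ⁶`. -/
def kleinForm (p : Fin 6 → ℝ) : ℝ :=
  p 0 * p 3 + p 1 * p 4 + p 2 * p 5

theorem pluck_indep (x y : Fin 4 → ℝ) (h : pluck x y ≠ 0) : LinearIndependent ℝ ![x, y] := by
  rw [LinearIndependent.pair_iff]
  intro s t hst
  have e : ∀ i, s * x i + t * y i = 0 := fun i => by simpa using congrFun hst i
  have e0 := e 0
  have e1 := e 1
  have e2 := e 2
  have e3 := e 3
  constructor
  · by_contra hs
    apply h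
    funext k
    apply mul_left_cancel₀ hs
    fin_cases k <;> simp [pluck] <;> grind
  · by_contra hs
    apply h
    funext k
    apply mul_left_cancel₀ hs
    fin_cases k <;> simp [pluck] <;> grind

theorem pluck_exists (p : Fin 6 → ℝ) (hp : p ≠ 0) (h : kleinForm p = 0) :
    ∃ x y : Fin 4 → ℝ, pluck x y = p := by
  obtain ⟨k, hk⟩ := Function.ne_iff.mp hp
  unfold kleinForm at h
  let r0 : Fin 4 → ℝ := ![0, p 0, p 1, p 2]
  let r1 : Fin 4 → ℝ := ![-p 0, 0, p 5, -p 4]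
  let r2 : Fin 4 → ℝ := ![-p 1, -p 5, 0, p 3]
  let r3 : Fin 4 → ℝ := ![-p 2, p 4, -p 3, 0]
  fin_cases k <;> simp at hk
  · refine ⟨fun i => r0 i / p 0, r1, ?_⟩
    funext l
    fin_cases l <;> simp [pluck, r0, r1] <;> field_simp <;> grind
  · refine ⟨fun i => r0 i / p 1, r2, ?_⟩
    funext l
    fin_cases l <;> simp [pluck, r0, r2] <;> field_simp <;> grind
  · refine ⟨fun i => r0 i / p 2, r3, ?_⟩
    funext l
    fin_cases l <;> simp [pluck, r0, r3] <;> field_simp <;> grind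
  · refine ⟨fun i => r2 i / p 3, r3, ?_⟩
    funext l
    fin_cases l <;> simp [pluck, r2, r3] <;> field_simp <;> grind
  · refine ⟨fun i => r3 i / p 4, r1, ?_⟩
    funext l
    fin_cases l <;> simp [pluck, r3, r1] <;> field_simp <;> grind
  · refine ⟨fun i => r1 i / p 5, r2, ?_⟩
    funext l
    fin_cases l <;> simp [pluck, r1, r2] <;> field_simp <;> grind

theorem klein_mapping_surjective (p : Fin 6 → ℝ) (hp : p ≠ 0)
    (hΩ : kleinForm p = 0) :
    ∃ x y : Fin 4 → ℝ, LinearIndependent ℝ ![x, y] ∧ pluck x y = p := by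
  obtain ⟨x, y, h⟩ := pluck_exists p hp hΩ
  exact ⟨x, y, pluck_indep x y (h ▸ hp), h⟩
end

section
/- Let x, y ∈ ℝ^4 be linearly independent and u, v ∈ ℝ^4 be linearly independent. The two lines span{x,y} and span{u,v} of P^3(ℝ) intersect (i.e., span{x,y} ∩ span{u,v} ≠ {0}) if and only if B(p(x,y), p(u,v)) = 0, i.e., if and only if their Plücker coordinate vectors are conjugate with respect to Klein's quadric. -/
/-- The polar bilinear form of the Klein quadratic form. -/
def kleinBilin (p q : Fin 6 → ℝ) : ℝ :=
  p 0 * q 3 + p 1 * q 4 + p 2 * q 5 + p 3 * q 0 + p 4 * q 1 + p 5 * q 2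

theorem klein_eq_det_aux (x y u v : Fin 4 → ℝ) :
    kleinBilin (pluck x y) (pluck u v) = (Matrix.of ![x, y, u, v]).det := by
  rw [Matrix.det_succ_row_zero]
  simp [Fin.sum_univ_succ, Matrix.det_fin_three, kleinBilin, pluck, Fin.succAbove]
  ring

theorem lines_intersect_iff_conjugate (x y u v : Fin 4 → ℝ)
    (hxy : LinearIndependent ℝ ![x, y]) (huv : LinearIndependent ℝ ![u, v]) :
    Submodule.span ℝ {x, y} ⊓ Submodule.span ℝ {u, v} ≠ ⊥ ↔
      kleinBilin (pluck x y) (pluck u v) = 0 := by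
  rw [klein_eq_det_aux, ← Matrix.exists_vecMul_eq_zero_iff]
  have key : ∀ c : Fin 4 → ℝ, Matrix.vecMul c (Matrix.of ![x, y, u, v]) =
      (c 0 • x + c 1 • y) + (c 2 • u + c 3 • v) := by
    intro c
    ext j
    simp [Matrix.vecMul, dotProduct, Fin.sum_univ_four]
    ring
  rw [Submodule.ne_bot_iff]
  rw [LinearIndependent.pair_iff] at hxy huv
  constructor
  · rintro ⟨w, hw, hw0⟩
    obtain ⟨h1, h2⟩ := Submodule.mem_inf.1 hw
    obtain ⟨a, b, hab⟩ := Submodule.mem_span_pair.1 h1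
    obtain ⟨c, d, hcd⟩ := Submodule.mem_span_pair.1 h2
    refine ⟨![a, b, -c, -d], ?_, ?_⟩
    · intro h
      have ha : a = 0 := congrFun h 0
      have hb : b = 0 := congrFun h 1
      apply hw0
      rw [← hab, ha, hb]
      simp
    · rw [key]
      change (a • x + b • y) + ((-c) • u + (-d) • v) = 0
      rw [hab, neg_smul, neg_smul, ← neg_add, hcd, add_neg_cancel]
  · rintro ⟨c, hc, h⟩
    rw [key] at h
    refine ⟨c 0 • x + c 1 • y, Submodule.mem_inf.2
      ⟨Submodule.mem_span_pair.2 ⟨_, _, rfl⟩, ?_⟩, ?_⟩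
    · rw [eq_neg_of_add_eq_zero_left h]
      exact Submodule.neg_mem _ (Submodule.mem_span_pair.2 ⟨_, _, rfl⟩)
    · intro h0
      rw [h0, zero_add] at h
      obtain ⟨h1, h2⟩ := hxy _ _ h0
      obtain ⟨h3, h4⟩ := huv _ _ h
      apply hc
      ext j
      fin_cases j <;> simp [h1, h2, h3, h4]
end

section
/- Every 3-dimensional linear subspace W of ℝ^6 on which the Klein quadratic form Ω vanishes identically is of exactly one of the following two types: either there exists a nonzero y ∈ ℝ^4 with W = { p(y,z) : z ∈ ℝ^4 } (a bundle of lines), or there exists a nonzero u ∈ ℝ^4 with W = { p(x,y) : uᵀx = 0 and uᵀy = 0 } (a field of lines). In other words, the two-dimensional projective subspaces contained in Klein's quadric are precisely the Klein images of bundles of lines and fields of lines. -/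
open Matrix

/-- Skew matrix of a Plücker vector. -/
def PM (p : Fin 6 → ℝ) : Matrix (Fin 4) (Fin 4) ℝ :=
  !![0, p 0, p 1, p 2; -p 0, 0, p 5, -p 4; -p 1, -p 5, 0, p 3; -p 2, p 4, -p 3, 0]

/-- Dual skew matrix of a Plücker vector. -/
def PS (p : Fin 6 → ℝ) : Matrix (Fin 4) (Fin 4) ℝ :=
  !![0, p 3, p 4, p 5; -p 3, 0, p 2, -p 1; -p 4, -p 2, 0, p 0; -p 5, p 1, -p 0, 0]

/-- Polar form. -/
def kB (p q : Fin 6 → ℝ) : ℝ :=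
  p 0 * q 3 + p 1 * q 4 + p 2 * q 5 + p 3 * q 0 + p 4 * q 1 + p 5 * q 2

lemma PM_PS (p q : Fin 6 → ℝ) (h : kB p q = 0) : PM p * PS q = - (PM q * PS p) := by
  simp only [kB] at h
  ext i j
  fin_cases i <;> fin_cases j <;> simp [PM, PS, Matrix.mul_apply, Fin.sum_univ_four] <;>
    linarith

lemma PS_PM (p q : Fin 6 → ℝ) (h : kB p q = 0) : PS p * PM q = - (PS q * PM p) := by
  simp only [kB] at h
  ext i j
  fin_cases i <;> fin_cases j <;> simp [PM, PS, Matrix.mul_apply, Fin.sum_univ_four] <;>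
    linarith

lemma PM_PS_self (p : Fin 6 → ℝ) (h : kleinForm p = 0) : PM p * PS p = 0 := by
  simp only [kleinForm] at h
  ext i j
  fin_cases i <;> fin_cases j <;> simp [PM, PS, Matrix.mul_apply, Fin.sum_univ_four] <;>
    linarith

lemma PS_PM_self (p : Fin 6 → ℝ) (h : kleinForm p = 0) : PS p * PM p = 0 := by
  simp only [kleinForm] at h
  ext i j
  fin_cases i <;> fin_cases j <;> simp [PM, PS, Matrix.mul_apply, Fin.sum_univ_four] <;>
    linarith

lemma exists_col (A : Matrix (Fin 4) (Fin 4) ℝ) (h : A ≠ 0) :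
    ∃ v, A *ᵥ v ≠ 0 := by
  by_contra! hc
  apply h
  ext i j
  have := congrFun (hc (Pi.single j 1)) i
  simpa using this

lemma kB_comm (p q : Fin 6 → ℝ) : kB p q = kB q p := by simp only [kB]; ring

lemma step (p q r : Fin 6 → ℝ) (hp : kleinForm p = 0) (hq : kleinForm q = 0)
    (hr : kleinForm r = 0) (hpq : kB p q = 0) (hpr : kB p r = 0) (hqr : kB q r = 0)
    (h : PM p * PS q ≠ 0) :
    (∃ y, y ≠ 0 ∧ PS p *ᵥ y = 0 ∧ PS q *ᵥ y = 0 ∧ PS r *ᵥ y = 0) ∨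
    (∃ u, u ≠ 0 ∧ PM p *ᵥ u = 0 ∧ PM q *ᵥ u = 0 ∧ PM r *ᵥ u = 0) := by
  by_cases h3 : PS r * (PM p * PS q) = 0
  · left
    obtain ⟨v, hv⟩ := exists_col _ h
    refine ⟨_, hv, ?_, ?_, ?_⟩
    · rw [mulVec_mulVec, ← mul_assoc, PS_PM_self p hp]; simp
    · rw [mulVec_mulVec, PM_PS p q hpq, mul_neg, ← mul_assoc, PS_PM_self q hq]; simp
    · rw [mulVec_mulVec, h3]; simp
  · right
    obtain ⟨v, hv⟩ := exists_col _ h3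
    refine ⟨_, hv, ?_, ?_, ?_⟩
    · rw [mulVec_mulVec, ← mul_assoc, PM_PS p r hpr, neg_mul, mul_assoc, ← mul_assoc (PS p),
        PS_PM_self p hp]; simp
    · rw [mulVec_mulVec, PM_PS p q hpq, ← mul_assoc, PM_PS q r hqr, neg_mul, mul_neg, mul_assoc,
        ← mul_assoc (PS q), PS_PM_self q hq]; simp
    · rw [mulVec_mulVec, ← mul_assoc, PM_PS_self r hr]; simp

lemma step_all (p q r : Fin 6 → ℝ) (hp : kleinForm p = 0) (hq : kleinForm q = 0)
    (hr : kleinForm r = 0) (hpq : kB p q = 0) (hpr : kB p r = 0) (hqr : kB q r = 0)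
    (h : q ≠ 0) :
    (∃ y, y ≠ 0 ∧ PS p *ᵥ y = 0 ∧ PS q *ᵥ y = 0 ∧ PS r *ᵥ y = 0) ∨
    (∃ u, u ≠ 0 ∧ PM p *ᵥ u = 0 ∧ PM q *ᵥ u = 0 ∧ PM r *ᵥ u = 0) := by
  by_cases h1 : PM p * PS q = 0
  · by_cases h2 : PM r * PS q = 0
    · right
      have : PS q ≠ 0 := by
        intro h0
        apply h
        have e := fun i j => congrFun (congrFun h0 i) j
        have e1 := e 0 1
        have e2 := e 0 2
        have e3 := e 0 3
        have e4 := e 2 3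
        have e5 := e 3 1
        have e6 := e 1 2
        simp [PS] at e1 e2 e3 e4 e5 e6
        ext i
        fin_cases i <;> simp [*]
      obtain ⟨v, hv⟩ := exists_col _ this
      refine ⟨_, hv, ?_, ?_, ?_⟩
      · rw [mulVec_mulVec, h1]; simp
      · rw [mulVec_mulVec, PM_PS_self q hq]; simp
      · rw [mulVec_mulVec, h2]; simp
    · rcases step r q p hr hq hp (by rwa [kB_comm]) (by rwa [kB_comm]) (by rwa [kB_comm]) h2 with
        ⟨y, h0, a, b, c⟩ | ⟨y, h0, a, b, c⟩
      · exact Or.inl ⟨y, h0, c, b, a⟩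
      · exact Or.inr ⟨y, h0, c, b, a⟩
  · exact step p q r hp hq hr hpq hpr hqr h1

/-- The polar form as a bilinear form. -/
def kBil : LinearMap.BilinForm ℝ (Fin 6 → ℝ) :=
  LinearMap.mk₂ ℝ kB (by intros; simp [kB]; ring) (by intros; simp [kB]; ring)
    (by intros; simp [kB]; ring) (by intros; simp [kB]; ring)

lemma kBil_apply (p q : Fin 6 → ℝ) : kBil p q = kB p q := rfl

lemma kBil_symm : kBil.IsSymm := ⟨fun x y => by simp [kBil_apply, kB_comm x y]⟩

lemma kBil_nondeg : kBil.Nondegenerate := by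
  have key : ∀ p : Fin 6 → ℝ, (∀ q, kB p q = 0) → p = 0 := by
    intro p h
    have h' := fun i => h (Pi.single i 1)
    have e0 := h' 0
    have e1 := h' 1
    have e2 := h' 2
    have e3 := h' 3
    have e4 := h' 4
    have e5 := h' 5
    simp [kB, Pi.single_apply] at e0 e1 e2 e3 e4 e5
    ext i
    fin_cases i <;> simp [*]
  exact ⟨fun p h => key p h, fun p h => key p fun q => by rw [kB_comm]; exact h q⟩

lemma polar (W : Submodule ℝ (Fin 6 → ℝ)) (hnull : ∀ p ∈ W, kleinForm p = 0)
    (p q : Fin 6 → ℝ) (hp : p ∈ W) (hq : q ∈ W) : kB p q = 0 := by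
  have h1 := hnull _ hp
  have h2 := hnull _ hq
  have h3 := hnull _ (W.add_mem hp hq)
  simp only [kleinForm, kB, Pi.add_apply] at *
  linarith

lemma maximal (W : Submodule ℝ (Fin 6 → ℝ))
    (hdim : Module.finrank ℝ W = 3) (hnull : ∀ p ∈ W, kleinForm p = 0)
    (p : Fin 6 → ℝ) (hp : ∀ q ∈ W, kB q p = 0) : p ∈ W := by
  have hle : W ≤ kBil.orthogonal W := by
    intro x hx
    rw [LinearMap.BilinForm.mem_orthogonal_iff]
    intro y hy
    exact polar W hnull y x hy hx
  have hfin := LinearMap.BilinForm.finrank_orthogonal kBil_nondeg W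
  have heq := Submodule.eq_of_le_of_finrank_eq hle (by rw [hfin, hdim]; simp)
  rw [heq, LinearMap.BilinForm.mem_orthogonal_iff]
  exact hp

lemma PS_eqs (p : Fin 6 → ℝ) (y : Fin 4 → ℝ) (h : PS p *ᵥ y = 0) :
    p 3 * y 1 + p 4 * y 2 + p 5 * y 3 = 0 ∧ -p 3 * y 0 + p 2 * y 2 - p 1 * y 3 = 0 ∧
    -p 4 * y 0 - p 2 * y 1 + p 0 * y 3 = 0 ∧ -p 5 * y 0 + p 1 * y 1 - p 0 * y 2 = 0 := by
  have a := congrFun h 0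
  have b := congrFun h 1
  have c := congrFun h 2
  have d := congrFun h 3
  simp [PS, Matrix.mulVec, dotProduct, Fin.sum_univ_four] at a b c d
  refine ⟨?_, ?_, ?_, ?_⟩ <;> linarith

lemma PM_eqs (p : Fin 6 → ℝ) (y : Fin 4 → ℝ) (h : PM p *ᵥ y = 0) :
    p 0 * y 1 + p 1 * y 2 + p 2 * y 3 = 0 ∧ -p 0 * y 0 + p 5 * y 2 - p 4 * y 3 = 0 ∧
    -p 1 * y 0 - p 5 * y 1 + p 3 * y 3 = 0 ∧ -p 2 * y 0 + p 4 * y 1 - p 3 * y 2 = 0 := by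
  have a := congrFun h 0
  have b := congrFun h 1
  have c := congrFun h 2
  have d := congrFun h 3
  simp [PM, Matrix.mulVec, dotProduct, Fin.sum_univ_four] at a b c d
  refine ⟨?_, ?_, ?_, ?_⟩ <;> linarith

lemma nz (y : Fin 4 → ℝ) (h : y ≠ 0) : y 0 ≠ 0 ∨ y 1 ≠ 0 ∨ y 2 ≠ 0 ∨ y 3 ≠ 0 := by
  by_contra! hc
  obtain ⟨a, b, c, d⟩ := hc
  apply h
  ext i
  fin_cases i <;> simp [*]

lemma bundle_mem (p : Fin 6 → ℝ) (y : Fin 4 → ℝ) (hy : y ≠ 0) (h : PS p *ᵥ y = 0) :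
    ∃ z, pluck y z = p := by
  obtain ⟨a, b, c, d⟩ := PS_eqs p y h
  rcases nz y hy with h0 | h0 | h0 | h0
  · refine ⟨![0, p 0 / y 0, p 1 / y 0, p 2 / y 0], ?_⟩
    ext i; fin_cases i <;> simp [pluck] <;> field_simp <;> linarith
  · refine ⟨![-p 0 / y 1, 0, p 5 / y 1, -p 4 / y 1], ?_⟩
    ext i; fin_cases i <;> simp [pluck] <;> field_simp <;> linarith
  · refine ⟨![-p 1 / y 2, -p 5 / y 2, 0, p 3 / y 2], ?_⟩
    ext i; fin_cases i <;> simp [pluck] <;> field_simp <;> linarith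
  · refine ⟨![-p 2 / y 3, p 4 / y 3, -p 3 / y 3, 0], ?_⟩
    ext i; fin_cases i <;> simp [pluck] <;> field_simp <;> linarith

lemma bundle_orth (q : Fin 6 → ℝ) (y z : Fin 4 → ℝ) (h : PS q *ᵥ y = 0) :
    kB q (pluck y z) = 0 := by
  obtain ⟨a, b, c, d⟩ := PS_eqs q y h
  simp [kB, pluck]
  linear_combination (-z 0) * a - z 1 * b - z 2 * c - z 3 * d

lemma field_mem (p : Fin 6 → ℝ) (u : Fin 4 → ℝ) (hp : kleinForm p = 0) (h : PM p *ᵥ u = 0) :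
    ∃ x y, u ⬝ᵥ x = 0 ∧ u ⬝ᵥ y = 0 ∧ pluck x y = p := by
  have row : ∀ i, u ⬝ᵥ (PM p i) = 0 := fun i => by
    rw [dotProduct_comm]; exact congrFun h i
  have row' : ∀ i (c : ℝ), u ⬝ᵥ (c • PM p i) = 0 := fun i c => by
    rw [dotProduct_smul, row]; simp
  simp only [kleinForm] at hp
  by_cases h0 : p 0 = 0
  · by_cases h1 : p 1 = 0
    · by_cases h2 : p 2 = 0
      · by_cases h3 : p 3 = 0
        · by_cases h4 : p 4 = 0
          · by_cases h5 : p 5 = 0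
            · refine ⟨0, 0, by simp, by simp, ?_⟩
              ext i; fin_cases i <;> simp [pluck, *]
            · refine ⟨_, _, row' 1 (p 5)⁻¹, row 2, ?_⟩
              ext i; fin_cases i <;> simp [pluck, PM] <;> field_simp <;> linarith
          · refine ⟨_, _, row' 3 (p 4)⁻¹, row 1, ?_⟩
            ext i; fin_cases i <;> simp [pluck, PM] <;> field_simp <;> linarith
        · refine ⟨_, _, row' 2 (p 3)⁻¹, row 3, ?_⟩
          ext i; fin_cases i <;> simp [pluck, PM] <;> field_simp <;> linarith
      · refine ⟨_, _, row' 0 (p 2)⁻¹, row 3, ?_⟩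
        ext i; fin_cases i <;> simp [pluck, PM] <;> field_simp <;> linarith
    · refine ⟨_, _, row' 0 (p 1)⁻¹, row 2, ?_⟩
      ext i; fin_cases i <;> simp [pluck, PM] <;> field_simp <;> linarith
  · refine ⟨_, _, row' 0 (p 0)⁻¹, row 1, ?_⟩
    ext i; fin_cases i <;> simp [pluck, PM] <;> field_simp <;> linarith

lemma PM_pluck (u x y : Fin 4 → ℝ) :
    PM (pluck x y) *ᵥ u = (u ⬝ᵥ y) • x - (u ⬝ᵥ x) • y := by
  ext i
  fin_cases i <;> simp [PM, pluck, Matrix.mulVec, dotProduct, Fin.sum_univ_four] <;> ring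

lemma field_orth (q : Fin 6 → ℝ) (u x y : Fin 4 → ℝ) (hu : u ≠ 0) (h : PM q *ᵥ u = 0)
    (hx : u ⬝ᵥ x = 0) (hy : u ⬝ᵥ y = 0) : kB q (pluck x y) = 0 := by
  have h' : PM (pluck x y) *ᵥ u = 0 := by rw [PM_pluck, hx, hy]; simp
  obtain ⟨a, b, c, d⟩ := PM_eqs q u h
  obtain ⟨a', b', c', d'⟩ := PM_eqs _ u h'
  generalize pluck x y = r at *
  simp only [kB]
  rcases nz u hu with h0 | h0 | h0 | h0
  · apply mul_left_cancel₀ h0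
    linear_combination (-r 3) * b - r 4 * c - r 5 * d - q 3 * b' - q 4 * c' - q 5 * d'
  · apply mul_left_cancel₀ h0
    grind
  · apply mul_left_cancel₀ h0
    grind
  · apply mul_left_cancel₀ h0
    grind

lemma span_mem {A : (Fin 6 → ℝ) → Matrix (Fin 4) (Fin 4) ℝ}
    (hadd : ∀ p q, A (p + q) = A p + A q) (hsmul : ∀ (c : ℝ) p, A (c • p) = c • A p)
    (v : Fin 4 → ℝ) (p q r : Fin 6 → ℝ) (hp : A p *ᵥ v = 0) (hq : A q *ᵥ v = 0)
    (hr : A r *ᵥ v = 0) (a b c : ℝ) : A (a • p + b • q + c • r) *ᵥ v = 0 := by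
  simp [hadd, hsmul, add_mulVec, smul_mulVec, hp, hq, hr]

lemma exist_all (W : Submodule ℝ (Fin 6 → ℝ))
    (hdim : Module.finrank ℝ W = 3) (hnull : ∀ p ∈ W, kleinForm p = 0) :
    (∃ y, y ≠ 0 ∧ ∀ p ∈ W, PS p *ᵥ y = 0) ∨ (∃ u, u ≠ 0 ∧ ∀ p ∈ W, PM p *ᵥ u = 0) := by
  let B := Module.finBasisOfFinrankEq ℝ W hdim
  have hB : ∀ p ∈ W, ∃ a b c : ℝ,
      p = a • (B 0 : Fin 6 → ℝ) + b • (B 1 : Fin 6 → ℝ) + c • (B 2 : Fin 6 → ℝ) := by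
    intro p hp
    have := congrArg Subtype.val (B.sum_repr ⟨p, hp⟩)
    rw [Fin.sum_univ_three] at this
    exact ⟨_, _, _, this.symm⟩
  have hz : (B 1 : Fin 6 → ℝ) ≠ 0 := by
    have := B.ne_zero 1
    simpa using this
  have P := polar W hnull
  rcases step_all (B 0) (B 1) (B 2) (hnull _ (B 0).2) (hnull _ (B 1).2) (hnull _ (B 2).2)
    (P _ _ (B 0).2 (B 1).2) (P _ _ (B 0).2 (B 2).2) (P _ _ (B 1).2 (B 2).2) hz with
    ⟨y, h0, h1, h2, h3⟩ | ⟨y, h0, h1, h2, h3⟩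
  · left
    refine ⟨y, h0, fun p hp => ?_⟩
    obtain ⟨a, b, c, rfl⟩ := hB p hp
    refine span_mem (A := PS) ?_ ?_ y _ _ _ h1 h2 h3 a b c
    · intro p q; ext i j; fin_cases i <;> fin_cases j <;> simp [PS] <;> ring
    · intro p q; ext i j; fin_cases i <;> fin_cases j <;> simp [PS]
  · right
    refine ⟨y, h0, fun p hp => ?_⟩
    obtain ⟨a, b, c, rfl⟩ := hB p hp
    refine span_mem (A := PM) ?_ ?_ y _ _ _ h1 h2 h3 a b c
    · intro p q; ext i j; fin_cases i <;> fin_cases j <;> simp [PM] <;> ring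
    · intro p q; ext i j; fin_cases i <;> fin_cases j <;> simp [PM]

lemma not_both (y u : Fin 4 → ℝ) (hy : y ≠ 0) (hu : u ≠ 0)
    (h : ∀ z, PM (pluck y z) *ᵥ u = 0) : False := by
  have e : ∀ i k, u i * y k = (u ⬝ᵥ y) * (Pi.single i 1 : Fin 4 → ℝ) k := by
    intro i k
    have := congrFun (h (Pi.single i 1)) k
    rw [PM_pluck] at this
    simp only [Pi.sub_apply, Pi.smul_apply, smul_eq_mul, dotProduct_single, mul_one,
      Pi.zero_apply] at this
    linarith
  have hs : u ⬝ᵥ y = 0 := by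
    have e0 := e 0 0
    have e1 := e 1 1
    have e2 := e 2 2
    have e3 := e 3 3
    have : u ⬝ᵥ y = u 0 * y 0 + u 1 * y 1 + u 2 * y 2 + u 3 * y 3 := by
      simp [dotProduct, Fin.sum_univ_four]
    simp only [Pi.single_eq_same, mul_one] at e0 e1 e2 e3
    linarith
  obtain ⟨i, hi⟩ := Function.ne_iff.mp hu
  obtain ⟨k, hk⟩ := Function.ne_iff.mp hy
  have := e i k
  rw [hs, zero_mul] at this
  exact (mul_ne_zero hi hk) this

theorem planes_in_quadric_classification (W : Submodule ℝ (Fin 6 → ℝ))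
    (hdim : Module.finrank ℝ W = 3) (hnull : ∀ p ∈ W, kleinForm p = 0) :
    Xor'
      (∃ y : Fin 4 → ℝ, y ≠ 0 ∧
        (W : Set (Fin 6 → ℝ)) = {p | ∃ z : Fin 4 → ℝ, pluck y z = p})
      (∃ u : Fin 4 → ℝ, u ≠ 0 ∧
        (W : Set (Fin 6 → ℝ)) =
          {p | ∃ x y : Fin 4 → ℝ, u ⬝ᵥ x = 0 ∧ u ⬝ᵥ y = 0 ∧ pluck x y = p}) := by
  refine (xor_iff_or_and_not_and _ _).mpr ?_
  constructor
  · rcases exist_all W hdim hnull with ⟨y, hy, h⟩ | ⟨u, hu, h⟩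
    · left
      refine ⟨y, hy, Set.ext fun p => ⟨fun hp => bundle_mem p y hy (h p hp), ?_⟩⟩
      rintro ⟨z, rfl⟩
      exact maximal W hdim hnull _ fun q hq => bundle_orth q y z (h q hq)
    · right
      refine ⟨u, hu, Set.ext fun p => ⟨fun hp => field_mem p u (hnull p hp) (h p hp), ?_⟩⟩
      rintro ⟨x, y, hx, hy, rfl⟩
      exact maximal W hdim hnull _ fun q hq => field_orth q u x y hu (h q hq) hx hy
  · rintro ⟨⟨y, hy, h1⟩, ⟨u, hu, h2⟩⟩
    refine not_both y u hy hu fun z => ?_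
    have : pluck y z ∈ (W : Set (Fin 6 → ℝ)) := by rw [h1]; exact ⟨z, rfl⟩
    rw [h2] at this
    obtain ⟨a, b, ha, hb, hab⟩ := this
    rw [← hab, PM_pluck, ha, hb]; simp
end

section
/- Let y, y' ∈ ℝ^4 be linearly independent. Then the intersection of the two bundle subspaces W_y = { p(y,z) : z ∈ ℝ^4 } and W_{y'} = { p(y',z) : z ∈ ℝ^4 } equals the 1-dimensional subspace spanned by p(y,y'). (Two different bundles of lines have exactly the joining line of their vertices in common; the corresponding two-spaces on Klein's quadric intersect in exactly one point.) -/
/-- Common elements of the two bundles are proportional to `pluck y y'`. -/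
lemma pluck_prop (y y' z w : Fin 4 → ℝ) (hp : pluck y z = pluck y' w) (k l : Fin 6) :
    pluck y' w k * pluck y y' l = pluck y y' k * pluck y' w l := by
  have e0 := congrFun hp 0
  have e1 := congrFun hp 1
  have e2 := congrFun hp 2
  have e3 := congrFun hp 3
  have e4 := congrFun hp 4
  have e5 := congrFun hp 5
  simp [pluck] at e0 e1 e2 e3 e4 e5
  have d012 : y 0 * (y' 1 * w 2 - y' 2 * w 1) - y 1 * (y' 0 * w 2 - y' 2 * w 0)
      + y 2 * (y' 0 * w 1 - y' 1 * w 0) = 0 := by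
    rw [← e0, ← e1, ← e5]; ring
  have d013 : y 0 * (y' 3 * w 1 - y' 1 * w 3) + y 1 * (y' 0 * w 3 - y' 3 * w 0)
      - y 3 * (y' 0 * w 1 - y' 1 * w 0) = 0 := by
    rw [← e0, ← e2, ← e4]; ring
  have d023 : y 0 * (y' 2 * w 3 - y' 3 * w 2) - y 2 * (y' 0 * w 3 - y' 3 * w 0)
      + y 3 * (y' 0 * w 2 - y' 2 * w 0) = 0 := by
    rw [← e1, ← e2, ← e3]; ring
  have d123 : y 1 * (y' 2 * w 3 - y' 3 * w 2) + y 2 * (y' 3 * w 1 - y' 1 * w 3)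
      + y 3 * (y' 1 * w 2 - y' 2 * w 1) = 0 := by
    rw [← e3, ← e4, ← e5]; ring
  clear e0 e1 e2 e3 e4 e5 hp
  fin_cases k <;> fin_cases l <;> simp [pluck] <;> grind

lemma pluck_ne (y y' : Fin 4 → ℝ) (h : LinearIndependent ℝ ![y, y']) :
    ∃ k, pluck y y' k ≠ 0 := by
  by_contra! hc
  rw [LinearIndependent.pair_iff] at h
  have e0 := hc 0
  have e1 := hc 1
  have e2 := hc 2
  have e3 := hc 3
  have e4 := hc 4
  have e5 := hc 5
  simp [pluck] at e0 e1 e2 e3 e4 e5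
  have hz : ∀ i, y i = 0 := by
    intro i
    have := (h (-(y' i)) (y i) (by
      ext j
      simp only [Pi.add_apply, Pi.smul_apply, smul_eq_mul, Pi.zero_apply]
      fin_cases i <;> fin_cases j <;> simp <;> linarith)).2
    exact this
  have := (h 1 0 (by ext j; simp [hz])).1
  exact one_ne_zero this

theorem bundles_intersect_in_joining_line (y y' : Fin 4 → ℝ)
    (h : LinearIndependent ℝ ![y, y']) :
    {p : Fin 6 → ℝ | ∃ z : Fin 4 → ℝ, pluck y z = p} ∩
        {p : Fin 6 → ℝ | ∃ z : Fin 4 → ℝ, pluck y' z = p} =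
      (Submodule.span ℝ {pluck y y'} : Set (Fin 6 → ℝ)) := by
  ext p
  simp only [Set.mem_inter_iff, Set.mem_setOf_eq, SetLike.mem_coe,
    Submodule.mem_span_singleton]
  constructor
  · rintro ⟨⟨z, hz⟩, ⟨w, hw⟩⟩
    obtain ⟨k, hk⟩ := pluck_ne y y' h
    refine ⟨p k / pluck y y' k, ?_⟩
    ext l
    have := pluck_prop y y' z w (hz.trans hw.symm) k l
    rw [hw] at this
    simp only [Pi.smul_apply, smul_eq_mul]
    field_simp
    linarith
  · rintro ⟨a, rfl⟩
    refine ⟨⟨a • y', ?_⟩, ⟨(-a) • y, ?_⟩⟩ <;>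
    · ext l
      fin_cases l <;> simp [pluck] <;> ring
end

section
/- Every regular projective collineation of P^3(ℝ) is the product of at most six null polarities: for every A ∈ GL(4,ℝ) with det A > 0 there exist an even number k with 2 ≤ k ≤ 6, invertible skew-symmetric real 4×4 matrices S₁, …, S_k, and a nonzero λ ∈ ℝ, such that A = λ • (S₁ * S₂ * ⋯ * S_k). -/
open Matrix

def IsT (A : Matrix (Fin 4) (Fin 4) ℝ) : Prop :=
  ∃ S₁ S₂ : Matrix (Fin 4) (Fin 4) ℝ, (IsUnit S₁ ∧ S₁ᵀ = -S₁) ∧ (IsUnit S₂ ∧ S₂ᵀ = -S₂) ∧ A = S₁ * S₂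

lemma IsT.conj {A B P : Matrix (Fin 4) (Fin 4) ℝ} (hB : IsT B) (hP : IsUnit P)
    (h : A * P = P * B) : IsT A := by
  obtain ⟨S, T, ⟨hS, hS'⟩, ⟨hT, hT'⟩, rfl⟩ := hB
  have hd : IsUnit P.det := (Matrix.isUnit_iff_isUnit_det P).1 hP
  have hPt : IsUnit Pᵀ := by rwa [Matrix.isUnit_transpose]
  have hPi : IsUnit P⁻¹ := by rwa [Matrix.isUnit_nonsing_inv_iff]
  have hPti : IsUnit (P⁻¹)ᵀ := by rwa [Matrix.isUnit_transpose]
  refine ⟨P * S * Pᵀ, (P⁻¹)ᵀ * T * P⁻¹, ⟨(hP.mul hS).mul hPt, ?_⟩, ⟨(hPti.mul hT).mul hPi, ?_⟩, ?_⟩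
  · simp [Matrix.transpose_mul, hS', Matrix.mul_assoc]
  · simp [Matrix.transpose_mul, hT', Matrix.mul_assoc]
  · have e : Pᵀ * (P⁻¹)ᵀ = 1 := by
      rw [← Matrix.transpose_mul, Matrix.nonsing_inv_mul _ hd, Matrix.transpose_one]
    calc A = A * P * P⁻¹ := by rw [Matrix.mul_assoc, Matrix.mul_nonsing_inv _ hd, Matrix.mul_one]
      _ = P * S * T * P⁻¹ := by rw [h]; simp only [Matrix.mul_assoc]
      _ = P * S * (Pᵀ * (P⁻¹)ᵀ) * T * P⁻¹ := by rw [e, Matrix.mul_one]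
      _ = _ := by simp only [Matrix.mul_assoc]

lemma unit4 {P : Matrix (Fin 4) (Fin 4) ℝ} (h : P.det ≠ 0) : IsUnit P :=
  (Matrix.isUnit_iff_isUnit_det P).2 (isUnit_iff_ne_zero.2 h)

/-- `M ⊕ Mᵀ` -/
lemma isT_block (a b c d : ℝ) (h : a * d - b * c ≠ 0) :
    IsT !![a, b, 0, 0; c, d, 0, 0; 0, 0, a, c; 0, 0, b, d] := by
  refine ⟨!![0, 0, a, b; 0, 0, c, d; -a, -c, 0, 0; -b, -d, 0, 0],
    !![0, 0, -1, 0; 0, 0, 0, -1; 1, 0, 0, 0; 0, 1, 0, 0], ⟨unit4 ?_, ?_⟩, ⟨unit4 ?_, ?_⟩, ?_⟩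
  · have : (!![0, 0, a, b; 0, 0, c, d; -a, -c, 0, 0; -b, -d, 0, 0] : Matrix (Fin 4) (Fin 4) ℝ).det
      = (a * d - b * c) ^ 2 := by
      simp [Matrix.det_succ_row_zero, Fin.sum_univ_succ, Fin.succAbove]; ring
    rw [this]; positivity
  · ext i j; fin_cases i <;> fin_cases j <;> simp
  · simp [Matrix.det_succ_row_zero, Fin.sum_univ_succ, Fin.succAbove]
  · ext i j; fin_cases i <;> fin_cases j <;> simp
  · ext i j; fin_cases i <;> fin_cases j <;> simp [Matrix.mul_apply, Fin.sum_univ_succ]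

/-- diag(m,m,n,n) -/
lemma isT_diag (m n : ℝ) (hm : m ≠ 0) (hn : n ≠ 0) :
    IsT !![m, 0, 0, 0; 0, m, 0, 0; 0, 0, n, 0; 0, 0, 0, n] := by
  refine ⟨!![0, m, 0, 0; -m, 0, 0, 0; 0, 0, 0, n; 0, 0, -n, 0],
    !![0, -1, 0, 0; 1, 0, 0, 0; 0, 0, 0, -1; 0, 0, 1, 0], ⟨unit4 ?_, ?_⟩, ⟨unit4 ?_, ?_⟩, ?_⟩
  · simp [Matrix.det_succ_row_zero, Fin.sum_univ_succ, Fin.succAbove, hm, hn]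
  · ext i j; fin_cases i <;> fin_cases j <;> simp
  · simp [Matrix.det_succ_row_zero, Fin.sum_univ_succ, Fin.succAbove]
  · ext i j; fin_cases i <;> fin_cases j <;> simp
  · ext i j; fin_cases i <;> fin_cases j <;> simp [Matrix.mul_apply, Fin.sum_univ_succ]

lemma isT_lower (n x y z w : ℝ) (hn : n ≠ 0) (hn1 : n ≠ 1) :
    IsT !![1, 0, 0, 0; 0, 1, 0, 0; x, y, n, 0; z, w, 0, n] := by
  have h1 : 1 - n ≠ 0 := fun h => hn1 (by linarith)
  refine (isT_diag 1 n one_ne_zero hn).conj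
    (P := !![1, 0, 0, 0; 0, 1, 0, 0; x/(1-n), y/(1-n), 1, 0; z/(1-n), w/(1-n), 0, 1]) (unit4 ?_) ?_
  · simp [Matrix.det_succ_row_zero, Fin.sum_univ_succ, Fin.succAbove]
  · ext i j; fin_cases i <;> fin_cases j <;> simp [Matrix.mul_apply, Fin.sum_univ_succ] <;> field_simp <;> ring

lemma isT_upper (n x y z w : ℝ) (hn : n ≠ 0) (hn1 : n ≠ 1) :
    IsT !![1, 0, x, y; 0, 1, z, w; 0, 0, n, 0; 0, 0, 0, n] := by
  have h1 : n - 1 ≠ 0 := fun h => hn1 (by linarith)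
  refine (isT_diag 1 n one_ne_zero hn).conj
    (P := !![1, 0, x/(n-1), y/(n-1); 0, 1, z/(n-1), w/(n-1); 0, 0, 1, 0; 0, 0, 0, 1]) (unit4 ?_) ?_
  · simp [Matrix.det_succ_row_zero, Fin.sum_univ_succ, Fin.succAbove]
  · ext i j; fin_cases i <;> fin_cases j <;> simp [Matrix.mul_apply, Fin.sum_univ_succ] <;> field_simp <;> ring

/-- product of three -/
def Good (A : Matrix (Fin 4) (Fin 4) ℝ) : Prop :=
  ∃ T₁ T₂ T₃, IsT T₁ ∧ IsT T₂ ∧ IsT T₃ ∧ A = T₁ * T₂ * T₃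

lemma Good.conj {A B P : Matrix (Fin 4) (Fin 4) ℝ} (hB : Good B) (hP : IsUnit P)
    (h : A * P = P * B) : Good A := by
  obtain ⟨X, Y, Z, hX, hY, hZ, rfl⟩ := hB
  have hd : IsUnit P.det := (Matrix.isUnit_iff_isUnit_det P).1 hP
  have e : P⁻¹ * P = 1 := Matrix.nonsing_inv_mul _ hd
  have e' : P * P⁻¹ = 1 := Matrix.mul_nonsing_inv _ hd
  have key : ∀ X, IsT X → IsT (P * X * P⁻¹) := fun X hX => hX.conj hP (by
    rw [Matrix.mul_assoc, e, Matrix.mul_one])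
  refine ⟨_, _, _, key X hX, key Y hY, key Z hZ, ?_⟩
  calc A = A * P * P⁻¹ := by rw [Matrix.mul_assoc, e', Matrix.mul_one]
    _ = P * X * 1 * Y * 1 * Z * P⁻¹ := by rw [h]; simp only [Matrix.mul_assoc, Matrix.mul_one, Matrix.one_mul]
    _ = _ := by rw [← e]; simp only [Matrix.mul_assoc]

lemma IsT.one : IsT 1 := by
  convert isT_diag 1 1 one_ne_zero one_ne_zero using 1
  ext i j; fin_cases i <;> fin_cases j <;> simp

lemma IsT.good {A : Matrix (Fin 4) (Fin 4) ℝ} (h : IsT A) : Good A :=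
  ⟨A, 1, 1, h, .one, .one, by simp⟩

lemma exists_nd (s : ℝ) (hs : s ≠ 0) : ∃ n d : ℝ, n ≠ 0 ∧ n ≠ 1 ∧ d ≠ 0 ∧ d ≠ 1 ∧ n * d = s := by
  by_cases h : s = 2
  · exact ⟨4, 1/2, by norm_num, by norm_num, by norm_num, by norm_num, by rw [h]; norm_num⟩
  · refine ⟨2, s/2, by norm_num, by norm_num, by positivity, ?_, by ring⟩
    intro h'; apply h; linarith

/-- case of a diagonal pivot block -/
lemma good_case3 (a b c : ℝ) (hc : a = c ^ 2 - b * c)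
    (hdet : 0 < (!![0, a, 0, 0; 1, b, 0, 0; 0, 0, c, 0; 0, 0, 0, c] : Matrix (Fin 4) (Fin 4) ℝ).det) :
    Good !![0, a, 0, 0; 1, b, 0, 0; 0, 0, c, 0; 0, 0, 0, c] := by
  have hD : 0 < -a * c ^ 2 := by
    have : (!![0, a, 0, 0; 1, b, 0, 0; 0, 0, c, 0; 0, 0, 0, c] : Matrix (Fin 4) (Fin 4) ℝ).det
        = -a * c ^ 2 := by
      simp [Matrix.det_succ_row_zero, Fin.sum_univ_succ, Fin.succAbove]
      exact Or.inl (by ring)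
    rwa [this] at hdet
  have hc0 : c ≠ 0 := by rintro rfl; simp at hD
  have ha : 0 < -a := by
    by_contra h; nlinarith [sq_nonneg c]
  obtain ⟨ξ, hξ0, hξ⟩ : ∃ ξ : ℝ, ξ ≠ 0 ∧ ξ ^ 2 = -a :=
    ⟨√(-a), (Real.sqrt_pos.2 ha).ne', Real.sq_sqrt ha.le⟩
  obtain ⟨n, d, hn, hn1, hd, hd1, hnd⟩ := exists_nd 1 one_ne_zero
  have hB : Good !![ξ, 0, ξ * (b - ξ) + a, 0; 0, c, 0, 0; 1, 0, b - ξ, 0; 0, 0, 0, c] := by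
    refine ⟨_, _, _, isT_lower n (1/ξ) 0 0 0 hn hn1, isT_block ξ 0 0 c (by simp [hξ0, hc0]),
      isT_upper d ((ξ * (b - ξ) + a)/ξ) 0 0 0 hd hd1, ?_⟩
    ext i j; fin_cases i <;> fin_cases j <;> simp [Matrix.mul_apply, Fin.sum_univ_succ]
    · field_simp
    · field_simp
    · field_simp
      linear_combination -hξ - ξ ^ 2 * hnd
    · linear_combination -c * hnd
  refine hB.conj (P := !![1, 0, -ξ, 0; 0, 0, 1, 0; 0, 1, 0, 0; 0, 0, 0, 1]) (unit4 ?_) ?_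
  · simp [Matrix.det_succ_row_zero, Fin.sum_univ_succ, Fin.succAbove]
  · ext i j; fin_cases i <;> fin_cases j <;> simp [Matrix.mul_apply, Fin.sum_univ_succ]
    all_goals ring

/-- main criterion -/
lemma good_tz (p u₁ u₂ u₃ u₄ x y z w : ℝ) (hp : p ≠ 0) (ht : u₁ = p * (x + w))
    (hdet : 0 < (!![0, p, u₁, u₂; 1, 0, u₃, u₄; 0, 1, x, y; 0, 0, z, w] : Matrix (Fin 4) (Fin 4) ℝ).det) :
    Good !![0, p, u₁, u₂; 1, 0, u₃, u₄; 0, 1, x, y; 0, 0, z, w] := by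
  set σ := y - u₂ / p with hσ
  have hy : u₂ = p * (y - σ) := by rw [hσ]; field_simp; ring
  have hD : 0 < p * (w ^ 2 + z * σ) := by
    convert hdet using 1
    simp [Matrix.det_succ_row_zero, Fin.sum_univ_succ, Fin.succAbove]
    subst ht
    rw [hy]; ring
  clear_value σ
  subst ht hy
  set q := w ^ 2 + z * σ with hq
  have hq0 : q ≠ 0 := by intro h; simp [h] at hD
  have hqp : 0 < q / p := by
    have := div_pos hD (by positivity : 0 < p ^ 2)
    have e : q / p = p * q / p ^ 2 := by field_simp
    rwa [e]
  obtain ⟨r, hr0, hr⟩ : ∃ r : ℝ, r ≠ 0 ∧ r ^ 2 = q / p :=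
    ⟨√(q / p), (Real.sqrt_pos.2 hqp).ne', Real.sq_sqrt hqp.le⟩
  have hr' : r ^ 2 * p = q := by rw [hr]; field_simp
  -- cyclic vector for the Schur complement
  obtain ⟨f, g, hfg⟩ : ∃ f g : ℝ, f * (z * f + w * g) - g * (-w * f + σ * g) ≠ 0 := by
    by_cases hz : z = 0
    · by_cases hs : σ = 0
      · refine ⟨1, 1, ?_⟩
        have : w ≠ 0 := by rintro rfl; apply hq0; rw [hq, hz]; ring
        intro h; apply this; rw [hz, hs] at h; linarith
      · exact ⟨0, 1, by simpa using hs⟩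
    · exact ⟨1, 0, by simpa using hz⟩
  obtain ⟨n, d, hn, hn1, hd, hd1, hnd⟩ := exists_nd r hr0
  have hT : IsT !![0, p, 0, 0; 1, 0, 0, 0; 0, 0, -w/r, σ/r; 0, 0, z/r, w/r] := by
    refine (isT_block 0 p 1 0 (by simpa using hp)).conj
      (P := !![1, 0, 0, 0; 0, 1, 0, 0; 0, 0, (-w*f+σ*g)/r, f; 0, 0, (z*f+w*g)/r, g]) (unit4 ?_) ?_
    · have : (!![1, 0, 0, 0; 0, 1, 0, 0; 0, 0, (-w*f+σ*g)/r, f; 0, 0, (z*f+w*g)/r, g] :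
        Matrix (Fin 4) (Fin 4) ℝ).det = -(f * (z * f + w * g) - g * (-w * f + σ * g)) / r := by
        simp [Matrix.det_succ_row_zero, Fin.sum_univ_succ, Fin.succAbove]
        field_simp
        ring
      rw [this]
      exact div_ne_zero (neg_ne_zero.2 hfg) hr0
    · ext i j; fin_cases i <;> fin_cases j <;> simp [Matrix.mul_apply, Fin.sum_univ_succ]
      · field_simp
        linear_combination -f * hr' + f * hq
      · field_simp
      · field_simp
        linear_combination -g * hr' + g * hq
      · field_simp
  refine ⟨_, _, _, isT_lower n (1/p) 0 0 0 hn hn1, hT,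
    isT_upper d u₃ u₄ (x + w) (y - σ) hd hd1, ?_⟩
  ext i j; fin_cases i <;> fin_cases j <;> simp [Matrix.mul_apply, Fin.sum_univ_succ]
  all_goals field_simp
  all_goals rw [← hnd]
  all_goals ring

lemma exists_conj (A B : Matrix (Fin 4) (Fin 4) ℝ) (v : Fin 4 → Fin 4 → ℝ)
    (hv : LinearIndependent ℝ v) (h : ∀ j, A *ᵥ v j = ∑ i, B i j • v i) :
    ∃ P : Matrix (Fin 4) (Fin 4) ℝ, IsUnit P ∧ A * P = P * B := by
  refine ⟨(Matrix.of v)ᵀ, ?_, ?_⟩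
  · rw [Matrix.isUnit_transpose]
    exact Matrix.linearIndependent_rows_iff_isUnit.1 hv
  · ext i j
    have := congrFun (h j) i
    simp only [Matrix.mulVec, dotProduct, Finset.sum_apply, Pi.smul_apply, smul_eq_mul] at this
    simp only [Matrix.mul_apply, Matrix.transpose_apply, Matrix.of_apply, this]
    exact Finset.sum_congr rfl fun _ _ => mul_comm _ _

lemma det_eq_of_conj {A B P : Matrix (Fin 4) (Fin 4) ℝ} (hP : IsUnit P)
    (h : A * P = P * B) : A.det = B.det := by
  have hd : P.det ≠ 0 := ((Matrix.isUnit_iff_isUnit_det P).1 hP).ne_zero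
  have := congrArg Matrix.det h
  rw [Matrix.det_mul, Matrix.det_mul, mul_comm] at this
  exact mul_left_cancel₀ hd this

/-- cyclic case -/
lemma good_cyclic (a b c τ : ℝ)
    (hdet : 0 < (!![0, 0, 0, a; 1, 0, 0, b; 0, 1, 0, c; 0, 0, 1, τ] : Matrix (Fin 4) (Fin 4) ℝ).det) :
    Good !![0, 0, 0, a; 1, 0, 0, b; 0, 1, 0, c; 0, 0, 1, τ] := by
  have hP : IsUnit (!![1, 0, -1, -τ; 0, 1, 0, -1; 0, 0, 1, 0; 0, 0, 0, 1] : Matrix (Fin 4) (Fin 4) ℝ) :=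
    unit4 (by simp [Matrix.det_succ_row_zero, Fin.sum_univ_succ, Fin.succAbove])
  have e : !![0, 0, 0, a; 1, 0, 0, b; 0, 1, 0, c; 0, 0, 1, τ] *
      !![1, 0, -1, -τ; 0, 1, 0, -1; 0, 0, 1, 0; 0, 0, 0, 1] =
      !![1, 0, -1, -τ; 0, 1, 0, -1; 0, 0, 1, 0; 0, 0, 0, 1] *
      !![0, 1, τ, τ^2+a+c-1; 1, 0, 0, b; 0, 1, 0, c-1; 0, 0, 1, τ] := by
    ext i j; fin_cases i <;> fin_cases j <;> simp [Matrix.mul_apply, Fin.sum_univ_succ]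
    all_goals ring
  rw [det_eq_of_conj hP e] at hdet
  exact (good_tz 1 τ _ 0 b 0 (c-1) 1 τ one_ne_zero (by ring) hdet).conj hP e

/-- degree three case -/
lemma good_deg3 (α β γ a b c d : ℝ)
    (hdet : 0 < (!![0, 0, α, a; 1, 0, β, b; 0, 1, γ, c; 0, 0, 0, d] : Matrix (Fin 4) (Fin 4) ℝ).det) :
    Good !![0, 0, α, a; 1, 0, β, b; 0, 1, γ, c; 0, 0, 0, d] := by
  have hD : 0 < α * d := by
    have : (!![0, 0, α, a; 1, 0, β, b; 0, 1, γ, c; 0, 0, 0, d] : Matrix (Fin 4) (Fin 4) ℝ).det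
        = α * d := by
      simp [Matrix.det_succ_row_zero, Fin.sum_univ_succ, Fin.succAbove]
    rwa [this] at hdet
  have hd : d ≠ 0 := by rintro rfl; simp at hD
  have hα : α ≠ 0 := by rintro rfl; simp at hD
  obtain ⟨p, rfl⟩ : ∃ p, α = p * d := ⟨α / d, by field_simp⟩
  have hp : p ≠ 0 := by rintro rfl; simp at hα
  have hP : IsUnit (!![1, 0, -p, 0; 0, 1, 0, 0; 0, 0, 1, 0; 0, 0, 0, 1] : Matrix (Fin 4) (Fin 4) ℝ) :=
    unit4 (by simp [Matrix.det_succ_row_zero, Fin.sum_univ_succ, Fin.succAbove])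
  have e : !![0, 0, p * d, a; 1, 0, β, b; 0, 1, γ, c; 0, 0, 0, d] *
      !![1, 0, -p, 0; 0, 1, 0, 0; 0, 0, 1, 0; 0, 0, 0, 1] =
      !![1, 0, -p, 0; 0, 1, 0, 0; 0, 0, 1, 0; 0, 0, 0, 1] *
      !![0, p, p * d + γ * p, a + p * c; 1, 0, β - p, b; 0, 1, γ, c; 0, 0, 0, d] := by
    ext i j; fin_cases i <;> fin_cases j <;> simp [Matrix.mul_apply, Fin.sum_univ_succ]
    all_goals ring
  rw [det_eq_of_conj hP e] at hdet
  exact (good_tz p _ _ _ _ _ _ _ _ hp (by ring) hdet).conj hP e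

/-- `M ⊕ M` -/
lemma good_double (a b : ℝ)
    (hdet : 0 < (!![0, a, 0, 0; 1, b, 0, 0; 0, 0, 0, a; 0, 0, 1, b] : Matrix (Fin 4) (Fin 4) ℝ).det) :
    Good !![0, a, 0, 0; 1, b, 0, 0; 0, 0, 0, a; 0, 0, 1, b] := by
  have ha : a ≠ 0 := by
    rintro rfl
    simp [Matrix.det_succ_row_zero, Fin.sum_univ_succ, Fin.succAbove] at hdet
  refine ((isT_block 0 a 1 b (by simpa using ha)).conj
    (P := !![1, 0, 0, 0; 0, 1, 0, 0; 0, 0, -b, 1; 0, 0, 1, 0]) (unit4 ?_) ?_).good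
  · simp [Matrix.det_succ_row_zero, Fin.sum_univ_succ, Fin.succAbove]
  · ext i j; fin_cases i <;> fin_cases j <;> simp [Matrix.mul_apply, Fin.sum_univ_succ]

lemma good_scalar (c : ℝ) (hc : c ≠ 0) : Good (c • 1) := by
  convert (isT_diag c c hc hc).good using 1
  ext i j; fin_cases i <;> fin_cases j <;> simp
lemma dep2 {a b c : Fin 4 → ℝ} (h : LinearIndependent ℝ ![a, b])
    (h' : ¬ LinearIndependent ℝ ![a, b, c]) : ∃ s t : ℝ, c = s • a + t • b := by
  obtain ⟨g, hg, hne⟩ := Fintype.not_linearIndependent_iff.1 h'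
  rw [Fintype.linearIndependent_iff] at h
  simp only [Fin.sum_univ_succ, Fin.sum_univ_zero] at hg
  simp at hg
  by_cases h2 : g 2 = 0
  · exfalso
    have := h ![g 0, g 1] (by simp; simpa [h2] using hg)
    obtain ⟨i, hi⟩ := hne
    have h0 := this 0
    have h1 := this 1
    fin_cases i <;> simp_all
  · refine ⟨-g 0 / g 2, -g 1 / g 2, ?_⟩
    have : g 2 • c = -(g 0 • a + g 1 • b) := by rw [eq_neg_iff_add_eq_zero, ← hg]; abel
    have e : c = (g 2)⁻¹ • (g 2 • c) := by rw [smul_smul, inv_mul_cancel₀ h2, one_smul]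
    rw [e, this]
    module

lemma dep3 {a b c d : Fin 4 → ℝ} (h : LinearIndependent ℝ ![a, b, c])
    (h' : ¬ LinearIndependent ℝ ![a, b, c, d]) : ∃ s t u : ℝ, d = s • a + t • b + u • c := by
  obtain ⟨g, hg, hne⟩ := Fintype.not_linearIndependent_iff.1 h'
  rw [Fintype.linearIndependent_iff] at h
  simp only [Fin.sum_univ_succ, Fin.sum_univ_zero] at hg
  simp at hg
  by_cases h2 : g 3 = 0
  · exfalso
    have := h ![g 0, g 1, g 2] (by simp [Fin.sum_univ_succ]; simpa [h2] using hg)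
    obtain ⟨i, hi⟩ := hne
    have h0 := this 0
    have h1 := this 1
    have h3 := this 2
    fin_cases i
    · exact hi h0
    · exact hi h1
    · exact hi h3
    · exact hi h2
  · refine ⟨-g 0 / g 3, -g 1 / g 3, -g 2 / g 3, ?_⟩
    have : g 3 • d = -(g 0 • a + g 1 • b + g 2 • c) := by rw [eq_neg_iff_add_eq_zero, ← hg]; abel
    have e : d = (g 3)⁻¹ • (g 3 • d) := by rw [smul_smul, inv_mul_cancel₀ h2, one_smul]
    rw [e, this]
    module

lemma dep4 {a b c d : Fin 4 → ℝ} (h : LinearIndependent ℝ ![a, b, c, d]) (y : Fin 4 → ℝ) :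
    ∃ s t u v : ℝ, y = s • a + t • b + u • c + v • d := by
  have hs := h.span_eq_top_of_card_eq_finrank (by simp)
  have : y ∈ Submodule.span ℝ (Set.range ![a, b, c, d]) := by rw [hs]; trivial
  obtain ⟨g, hg⟩ := (Submodule.mem_span_range_iff_exists_fun ℝ).1 this
  refine ⟨g 0, g 1, g 2, g 3, ?_⟩
  rw [← hg, Fin.sum_univ_four]; simp

lemma indep4 {a b c d : Fin 4 → ℝ} (h : LinearIndependent ℝ ![a, b, c, d]) (s t u v : ℝ)
    (e : s • a + t • b + u • c + v • d = 0) : s = 0 ∧ t = 0 ∧ u = 0 ∧ v = 0 := by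
  have := Fintype.linearIndependent_iff.1 h ![s, t, u, v] (by rw [Fin.sum_univ_four]; simpa using e)
  exact ⟨this 0, this 1, this 2, this 3⟩

lemma ndep3 {a b c : Fin 4 → ℝ} (h' : ¬ LinearIndependent ℝ ![a, b, c]) :
    ∃ s t u : ℝ, s • a + t • b + u • c = 0 ∧ ¬ (s = 0 ∧ t = 0 ∧ u = 0) := by
  obtain ⟨g, hg, i, hi⟩ := Fintype.not_linearIndependent_iff.1 h'
  refine ⟨g 0, g 1, g 2, by rw [Fin.sum_univ_three] at hg; simpa using hg, ?_⟩
  rintro ⟨h0, h1, h2⟩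
  fin_cases i <;> simp_all

lemma li4 {a b c d : Fin 4 → ℝ} (h : ∀ s t u v : ℝ, s • a + t • b + u • c + v • d = 0 →
    s = 0 ∧ t = 0 ∧ u = 0 ∧ v = 0) : LinearIndependent ℝ ![a, b, c, d] := by
  rw [Fintype.linearIndependent_iff]
  intro g hg i
  rw [Fin.sum_univ_four] at hg
  obtain ⟨h0, h1, h2, h3⟩ := h (g 0) (g 1) (g 2) (g 3) (by simpa using hg)
  fin_cases i <;> assumption

lemma extend2 {a b : Fin 4 → ℝ} (h : LinearIndependent ℝ ![a, b]) :
    ∃ c, LinearIndependent ℝ ![a, b, c] := by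
  obtain ⟨x, hx⟩ := exists_linearIndependent_snoc_of_lt_finrank (R := ℝ) h (by simp)
  have e : (Fin.snoc ![a, b] x : Fin 3 → Fin 4 → ℝ) = ![a, b, x] := by
    ext i j; fin_cases i <;> rfl
  exact ⟨x, e ▸ hx⟩

lemma extend3 {a b c : Fin 4 → ℝ} (h : LinearIndependent ℝ ![a, b, c]) :
    ∃ d, LinearIndependent ℝ ![a, b, c, d] := by
  obtain ⟨x, hx⟩ := exists_linearIndependent_snoc_of_lt_finrank (R := ℝ) h (by simp)
  have e : (Fin.snoc ![a, b, c] x : Fin 4 → Fin 4 → ℝ) = ![a, b, c, x] := by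
    ext i j; fin_cases i <;> rfl
  exact ⟨x, e ▸ hx⟩

lemma good_of_basis {A : Matrix (Fin 4) (Fin 4) ℝ} (hdet : 0 < A.det) (B : Matrix (Fin 4) (Fin 4) ℝ)
    {a b c d : Fin 4 → ℝ} (hv : LinearIndependent ℝ ![a, b, c, d])
    (ha : A *ᵥ a = B 0 0 • a + B 1 0 • b + B 2 0 • c + B 3 0 • d)
    (hb : A *ᵥ b = B 0 1 • a + B 1 1 • b + B 2 1 • c + B 3 1 • d)
    (hc : A *ᵥ c = B 0 2 • a + B 1 2 • b + B 2 2 • c + B 3 2 • d)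
    (hd : A *ᵥ d = B 0 3 • a + B 1 3 • b + B 2 3 • c + B 3 3 • d)
    (hB : 0 < B.det → Good B) : Good A := by
  obtain ⟨P, hP, e⟩ := exists_conj A B _ hv (by
    intro j
    rw [Fin.sum_univ_four]
    fin_cases j
    · exact ha
    · exact hb
    · exact hc
    · exact hd)
  exact (hB (det_eq_of_conj hP e ▸ hdet)).conj hP e

lemma good_all (A : Matrix (Fin 4) (Fin 4) ℝ) (hdet : 0 < A.det) : Good A := by
  by_cases h3 : ∃ x, LinearIndependent ℝ ![x, A *ᵥ x, A *ᵥ (A *ᵥ x)]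
  · obtain ⟨x, hx⟩ := h3
    by_cases h4 : LinearIndependent ℝ ![x, A *ᵥ x, A *ᵥ (A *ᵥ x), A *ᵥ (A *ᵥ (A *ᵥ x))]
    · obtain ⟨s, t, u, v, e⟩ := dep4 h4 (A *ᵥ (A *ᵥ (A *ᵥ (A *ᵥ x))))
      exact good_of_basis hdet _ h4 (by simp) (by simp) (by simp) (by simpa using e)
        (good_cyclic s t u v)
    · obtain ⟨α, β, γ, e⟩ := dep3 hx h4
      obtain ⟨y, hy⟩ := extend3 hx
      obtain ⟨s, t, u, v, e'⟩ := dep4 hy (A *ᵥ y)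
      exact good_of_basis hdet _ hy (by simp) (by simp) (by simpa using e) (by simpa using e')
        (good_deg3 α β γ s t u v)
  push Not at h3
  by_cases h2 : ∃ x, LinearIndependent ℝ ![x, A *ᵥ x]
  swap
  · push Not at h2
    obtain ⟨c, hc⟩ := (Matrix.toLin' A).exists_eq_smul_id_of_forall_notLinearIndependent
      (fun v => by simpa using h2 v)
    have hA : A = c • 1 := by
      have := congrArg LinearMap.toMatrix' hc
      simpa using this
    rw [hA]
    apply good_scalar
    rintro rfl
    rw [hA] at hdet
    simp at hdet
  obtain ⟨x, hx⟩ := h2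
  obtain ⟨a, b, hab⟩ := dep2 hx (h3 x)
  by_cases h4 : ∃ y, LinearIndependent ℝ ![x, A *ᵥ x, y, A *ᵥ y]
  · obtain ⟨y, hy⟩ := h4
    have hy2 : LinearIndependent ℝ ![y, A *ᵥ y] := by
      rw [LinearIndependent.pair_iff]
      intro s t e
      have := indep4 hy 0 0 s t (by simpa using e)
      exact ⟨this.2.2.1, this.2.2.2⟩
    obtain ⟨a', b', hab'⟩ := dep2 hy2 (h3 y)
    obtain ⟨s, t, u, e, hne⟩ := ndep3 (h3 (x + y))
    simp only [Matrix.mulVec_add] at e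
    rw [hab, hab'] at e
    obtain ⟨e1, e2, e3, e4⟩ := indep4 hy (s + u * a) (t + u * b) (s + u * a') (t + u * b') (by
      rw [← e]; module)
    have hu : u ≠ 0 := by
      rintro rfl
      apply hne
      refine ⟨by linarith, by linarith, rfl⟩
    have haa : a' = a := mul_left_cancel₀ hu (by linarith)
    have hbb : b' = b := mul_left_cancel₀ hu (by linarith)
    subst haa hbb
    exact good_of_basis hdet _ hy (by simp) (by simpa using hab) (by simp) (by simpa using hab')
        (good_double _ _)
  push Not at h4
  obtain ⟨y, hy⟩ := extend2 hx
  obtain ⟨z, hz⟩ := extend3 hy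
  have hz' : LinearIndependent ℝ ![x, A *ᵥ x, z] := by
    rw [Fintype.linearIndependent_iff]
    intro g hg i
    rw [Fin.sum_univ_three] at hg
    have := indep4 hz (g 0) (g 1) 0 (g 2) (by simpa using hg)
    fin_cases i
    · exact this.1
    · exact this.2.1
    · exact this.2.2.2
  have hyz' : LinearIndependent ℝ ![x, A *ᵥ x, y + z] := by
    rw [Fintype.linearIndependent_iff]
    intro g hg i
    rw [Fin.sum_univ_three] at hg
    have := indep4 hz (g 0) (g 1) (g 2) (g 2) (by rw [← hg]; simp; abel)
    fin_cases i
    · exact this.1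
    · exact this.2.1
    · exact this.2.2.2
  obtain ⟨y0, y1, c, ey⟩ := dep3 hy (h4 y)
  obtain ⟨z0, z1, c', ez⟩ := dep3 hz' (h4 z)
  obtain ⟨w0, w1, c'', ew⟩ := dep3 hyz' (h4 (y + z))
  have hcc : c' = c := by
    rw [Matrix.mulVec_add, ey, ez] at ew
    have := indep4 hz (y0 + z0 - w0) (y1 + z1 - w1) (c - c'') (c' - c'') (by
      rw [← sub_eq_zero] at ew
      rw [← ew]; module)
    linarith [this.2.2.1, this.2.2.2]
  subst hcc
  -- normalize `y` and `z`
  obtain ⟨Y, hY⟩ : ∃ Y, Y = y - y1 • x := ⟨_, rfl⟩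
  obtain ⟨Z, hZ⟩ : ∃ Z, Z = z - z1 • x := ⟨_, rfl⟩
  have hYe : A *ᵥ Y = (y0 + c' * y1) • x + c' • Y := by
    rw [hY, Matrix.mulVec_sub, Matrix.mulVec_smul, ey]; module
  have hZe : A *ᵥ Z = (z0 + c' * z1) • x + c' • Z := by
    rw [hZ, Matrix.mulVec_sub, Matrix.mulVec_smul, ez]; module
  have hL : LinearIndependent ℝ ![x, A *ᵥ x, Y, Z] := by
    apply li4
    intro s t u v e
    have := indep4 hz (s - u * y1 - v * z1) t u v (by rw [← e, hY, hZ]; module)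
    obtain ⟨q1, q2, q3, q4⟩ := this
    refine ⟨?_, q2, q3, q4⟩
    rw [q3, q4] at q1; linarith
  have hμ : y0 + c' * y1 = 0 := by
    by_contra hne0
    obtain ⟨s, t, u, e, hne⟩ := ndep3 (h3 Y)
    generalize y0 + c' * y1 = μ at *
    rw [hYe, Matrix.mulVec_add, Matrix.mulVec_smul, Matrix.mulVec_smul, hYe] at e
    obtain ⟨q1, q2, q3, -⟩ := indep4 hL (t * μ + u * c' * μ) (u * μ) (s + t * c' + u * c' ^ 2) 0 (by
      rw [← e]; module)
    have hu : u = 0 := by simpa [hne0] using q2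
    subst hu
    have ht : t = 0 := by simpa [hne0] using q1
    subst ht
    exact hne ⟨by simpa using q3, rfl, rfl⟩
  have hν : z0 + c' * z1 = 0 := by
    by_contra hne0
    obtain ⟨s, t, u, e, hne⟩ := ndep3 (h3 Z)
    generalize z0 + c' * z1 = μ at *
    rw [hZe, Matrix.mulVec_add, Matrix.mulVec_smul, Matrix.mulVec_smul, hZe] at e
    obtain ⟨q1, q2, -, q3⟩ := indep4 hL (t * μ + u * c' * μ) (u * μ) 0 (s + t * c' + u * c' ^ 2) (by
      rw [← e]; module)
    have hu : u = 0 := by simpa [hne0] using q2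
    subst hu
    have ht : t = 0 := by simpa [hne0] using q1
    subst ht
    exact hne ⟨by simpa using q3, rfl, rfl⟩
  rw [hμ, zero_smul, zero_add] at hYe
  rw [hν, zero_smul, zero_add] at hZe
  have hrel : a = c' ^ 2 - b * c' := by
    obtain ⟨s, t, u, e, hne⟩ := ndep3 (h3 (x + Y))
    simp only [Matrix.mulVec_add, hYe, Matrix.mulVec_smul] at e
    rw [hab] at e
    obtain ⟨q1, q2, q3, -⟩ := indep4 hL (s + u * a) (t + u * b) (s + t * c' + u * c' ^ 2) 0 (by
      rw [← e]; module)
    have hu : u ≠ 0 := by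
      rintro rfl
      apply hne
      refine ⟨by linarith, by linarith, rfl⟩
    apply mul_left_cancel₀ hu
    linear_combination q1 + c' * q2 - q3
  exact good_of_basis hdet _ hL (by simp) (by simpa using hab) (by simpa using hYe)
    (by simpa using hZe) (good_case3 a b c' hrel)

theorem collineation_eq_product_of_nullPolarities (A : Matrix (Fin 4) (Fin 4) ℝ)
    (hA : IsUnit A) (hdet : 0 < A.det) :
    ∃ k : ℕ, Even k ∧ 2 ≤ k ∧ k ≤ 6 ∧
      ∃ S : Fin k → Matrix (Fin 4) (Fin 4) ℝ,
        (∀ i, IsUnit (S i) ∧ (S i)ᵀ = -(S i)) ∧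
        ∃ lam : ℝ, lam ≠ 0 ∧ A = lam • (List.ofFn S).prod := by
  obtain ⟨_, _, _, ⟨S₁, S₂, h1, h2, rfl⟩, ⟨S₃, S₄, h3, h4, rfl⟩, ⟨S₅, S₆, h5, h6, rfl⟩, e⟩ :=
    good_all A hdet
  refine ⟨6, by decide, by norm_num, le_rfl, ![S₁, S₂, S₃, S₄, S₅, S₆], ?_, 1, one_ne_zero, ?_⟩
  · intro i
    fin_cases i
    · exact h1
    · exact h2
    · exact h3
    · exact h4
    · exact h5
    · exact h6
  · rw [e]
    simp [List.ofFn_succ, Matrix.mul_assoc]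
end
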